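/- An AME(8,7) state of minimal support exists, and for every integer n ≥ 9 no AME(n,7) state of minimal support exists; that is, N(7) = 8, where N(7) is the largest n for which an AME(n,7) state of minimal support exists. -/

import Mathlib

open scoped BigOperators Classical

noncomputable section

namespace AMEPaper

/-- Combine a configuration on the complement of `B` with a configuration on `B`
into a full configuration on `Fin n`. -/
def combine {n d : ℕ} (B : Finset (Fin n)) (a : {i : Fin n // i ∉ B} → Fin d)
    (b : {i : Fin n // i ∈ B} → Fin d) : Fin n → Fin d :=
  fun i => if h : i ∈ B then b ⟨i, h⟩ else a ⟨i, h⟩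

/-- `ψ` is an absolutely maximally entangled state with `n` sites and local dimension `d`:
it is a unit vector and, for every set `B` of at most `n/2` sites, the reduced density
matrix on `B` equals `d ^ (-|B|)` times the identity. -/
def IsAME (n d : ℕ) (ψ : (Fin n → Fin d) → ℂ) : Prop :=
  (∑ s : Fin n → Fin d, ‖ψ s‖ ^ 2 = 1) ∧
  ∀ B : Finset (Fin n), B.card ≤ n / 2 →
    ∀ b b' : {i : Fin n // i ∈ B} → Fin d,
      (∑ a : {i : Fin n // i ∉ B} → Fin d,
          ψ (combine B a b) * (starRingEnd ℂ) (ψ (combine B a b'))) =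
        if b = b' then ((d : ℂ) ^ B.card)⁻¹ else 0

/-- `ψ` has minimal support: its support in the computational basis has exactly
`d ^ ⌊n/2⌋` elements. -/
def HasMinimalSupport (n d : ℕ) (ψ : (Fin n → Fin d) → ℂ) : Prop :=
  {s : Fin n → Fin d | ψ s ≠ 0}.ncard = d ^ (n / 2)

/-- `C` is an MDS code over the alphabet `Fin d` with wordlength `n` and minimum
Hamming distance `δ`: its minimum distance is exactly `δ` and it meets the Singleton
bound, `|C| = d ^ (n - δ + 1)`. -/
def IsMDSCode (d n δ : ℕ) (C : Finset (Fin n → Fin d)) : Prop :=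
  C.card = d ^ (n - δ + 1) ∧
  (∀ w ∈ C, ∀ w' ∈ C, w ≠ w' → δ ≤ hammingDist w w') ∧
  (∃ w ∈ C, ∃ w' ∈ C, w ≠ w' ∧ hammingDist w w' = δ)

/-- A latin `k`-hypercube of order `d`: fixing all indices but any one of them, the
resulting map `Fin d → Fin d` is a bijection. -/
def IsLatinHypercube (k d : ℕ) (L : (Fin k → Fin d) → Fin d) : Prop :=
  ∀ (i : Fin k) (x : Fin k → Fin d),
    Function.Bijective fun v : Fin d => L (Function.update x i v)

/-- Two latin `k`-hypercubes are orthogonal if for every pair of distinct indices and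
all ways of fixing the remaining indices, the two resulting latin squares are
orthogonal. -/
def AreOrthogonalHypercubes (k d : ℕ) (L M : (Fin k → Fin d) → Fin d) : Prop :=
  ∀ (i j : Fin k), i ≠ j → ∀ x : Fin k → Fin d,
    Function.Injective fun p : Fin d × Fin d =>
      (L (Function.update (Function.update x i p.1) j p.2),
       M (Function.update (Function.update x i p.1) j p.2))

/-- A latin square of order `d`: every row and every column is a bijection. -/
def IsLatinSquare (d : ℕ) (L : Fin d × Fin d → Fin d) : Prop :=
  (∀ i : Fin d, Function.Bijective fun j => L (i, j)) ∧
  (∀ j : Fin d, Function.Bijective fun i => L (i, j))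

/-!
The support of a minimally supported `AME(n, d)` state is an MDS code of dimension `⌊n/2⌋` and
length `n` over `d` symbols, and conversely the uniform superposition of the words of such a code
is a state of this kind. For `n = 8` and `d = 7` the extended Reed–Solomon code will do.

If there were such a code for `d = 7` and some `n ≥ 9`, then shortening it would give an MDS code
`D` of dimension 3 and length 8 over 7 symbols with a deep hole: a word `w` that agrees with no
word of `D` in more than three positions. Counting shows that every set `x` of two or three
positions is the set of agreement of `w` with exactly one word of `D`. Fix a position `p` and
colour the pairs and triples `x` of the other seven positions by the values of these words at `p`.
The blocks of a colour form a linear space on the seven positions, and a parity argument puts each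
position on exactly zero or two pairs, hence on at least two triples, of each colour. At every other
position the pigeonhole principle produces four triples off it, with distinct colours, any two of
which share at most one point. A finite search shows that no partition of the pairs and triples of
seven points into linear spaces has all these properties.
-/

section MDS

open Finset

variable {ι α : Type*}

/-- `C` is a maximum distance separable code of dimension `k`, stated through its interpolation
property: every prescription on `k` positions is met by exactly one word. Unlike `IsMDSCode`, this
allows arbitrary types of positions and symbols, and does not mention the minimum distance. -/
def IsMDS (k : ℕ) (C : Set (ι → α)) : Prop :=
  ∀ s : Finset ι, #s = k → ∀ f : ι → α, ∃! c, c ∈ C ∧ ∀ i ∈ s, c i = f i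

namespace IsMDS

variable {k : ℕ} {C : Set (ι → α)}

theorem eq_of_eqOn (hC : IsMDS k C) {c c' : ι → α} (hc : c ∈ C) (hc' : c' ∈ C)
    {s : Finset ι} (hk : k ≤ #s) (hs : ∀ i ∈ s, c i = c' i) : c = c' := by
  obtain ⟨t, hts, ht⟩ := exists_subset_card_eq hk
  exact (hC t ht c').unique ⟨hc, fun i hi => hs i (hts hi)⟩ ⟨hc', fun _ _ => rfl⟩

theorem image_comp (hC : IsMDS k C) {κ β : Type*} (e : κ ≃ ι) (g : α ≃ β) :
    IsMDS k ((fun c => g ∘ c ∘ e) '' C) := by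
  intro s hs f
  obtain ⟨c, ⟨hcC, hc⟩, huniq⟩ := hC (s.map e.toEmbedding) (by rwa [card_map])
    (g.symm ∘ f ∘ e.symm)
  refine ⟨g ∘ c ∘ e, ⟨Set.mem_image_of_mem _ hcC, fun i hi => ?_⟩, ?_⟩
  · simp [hc (e i) (mem_map_of_mem _ hi)]
  · rintro _ ⟨⟨c', hc'C, rfl⟩, hc'⟩
    rw [huniq c' ⟨hc'C, ?_⟩]
    intro i hi
    obtain ⟨j, hj, rfl⟩ := mem_map.1 hi
    simpa [g.eq_symm_apply] using hc' j hj

theorem shorten (hC : IsMDS k C) {m : ℕ} {s t : Finset ι} (hst : Disjoint s t) (hk : m + #t = k)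
    (z : ι → α) : IsMDS m {d : s → α | ∃ c ∈ C, (∀ i ∈ t, c i = z i) ∧ ∀ i : s, c i = d i} := by
  intro u hu f
  have hut : Disjoint (u.map (.subtype _)) t :=
    disjoint_of_subset_left (fun i hi => property_of_mem_map_subtype u hi) hst
  have hcard : #(u.map (.subtype _) ∪ t) = k := by rw [card_union_of_disjoint hut, card_map, hu, hk]
  obtain ⟨c, ⟨hcC, hc⟩, huniq⟩ := hC _ hcard fun i => if h : i ∈ s then f ⟨i, h⟩ else z i
  refine ⟨fun i => c i, ⟨⟨c, hcC, fun i hi => ?_, fun _ => rfl⟩, fun i hi => ?_⟩, ?_⟩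
  · rw [hc i (mem_union_right _ hi), dif_neg (disjoint_right.1 hst hi)]
  · exact (hc i (mem_union_left _ (mem_map_of_mem _ hi))).trans (dif_pos i.2)
  · rintro d ⟨⟨c', hc'C, hc't, hc'd⟩, hd⟩
    suffices c' = c from funext fun i => (hc'd i).symm.trans (congrFun this i)
    refine huniq c' ⟨hc'C, fun i hi => ?_⟩
    rcases mem_union.1 hi with hi | hi
    · obtain ⟨j, hj, rfl⟩ := mem_map.1 hi
      rw [Function.Embedding.subtype_apply, dif_pos j.2]
      exact (hc'd j).trans (hd j hj)
    · rw [hc't i hi, dif_neg (disjoint_right.1 hst hi)]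

theorem ncard_extensions [Fintype ι] [Fintype α] (hC : IsMDS k C) {s : Finset ι} (hs : #s ≤ k)
    (hk : k ≤ Fintype.card ι) (f : ι → α) :
    {c ∈ C | ∀ i ∈ s, c i = f i}.ncard = Fintype.card α ^ (k - #s) := by
  obtain ⟨t, hst, ht⟩ := exists_superset_card_eq hs hk
  have hbij : Function.Bijective
      fun (c : {c ∈ C | ∀ i ∈ s, c i = f i}) (i : ↥(t \ s)) => c.1 i := by
    rw [Function.bijective_iff_existsUnique]
    intro g
    obtain ⟨c, ⟨hcC, hc⟩, huniq⟩ := hC t ht fun i => if h : i ∈ t \ s then g ⟨i, h⟩ else f i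
    refine ⟨⟨c, hcC, fun i hi => ?_⟩, funext fun i => ?_, ?_⟩
    · rw [hc i (hst hi), dif_neg fun h => (mem_sdiff.1 h).2 hi]
    · exact (hc i (mem_sdiff.1 i.2).1).trans (dif_pos i.2)
    · rintro ⟨c', hc'C, hc's⟩ rfl
      refine Subtype.ext (huniq c' ⟨hc'C, fun i hi => ?_⟩)
      split_ifs with h
      · rfl
      · exact hc's i (by simpa [hi] using h)
  rw [← Nat.card_coe_set_eq, Nat.card_eq_of_bijective _ hbij, Nat.card_fun,
    Nat.card_eq_fintype_card, Nat.card_eq_fintype_card, Fintype.card_coe,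
    card_sdiff_of_subset hst, ht]

theorem ncard_eq [Fintype ι] [Fintype α] [Nonempty α] (hC : IsMDS k C) (hk : k ≤ Fintype.card ι) :
    C.ncard = Fintype.card α ^ k := by
  obtain ⟨a⟩ := ‹Nonempty α›
  simpa using hC.ncard_extensions (s := ∅) (Nat.zero_le k) hk fun _ => a

end IsMDS

end MDS

section AME

open Finset

variable {n d : ℕ}

theorem combine_of_mem {B : Finset (Fin n)} {i : Fin n} (hi : i ∈ B)
    (a : {i : Fin n // i ∉ B} → Fin d) (b : {i : Fin n // i ∈ B} → Fin d) :
    combine B a b i = b ⟨i, hi⟩ := dif_pos hi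

theorem combine_of_notMem {B : Finset (Fin n)} {i : Fin n} (hi : i ∉ B)
    (a : {i : Fin n // i ∉ B} → Fin d) (b : {i : Fin n // i ∈ B} → Fin d) :
    combine B a b i = a ⟨i, hi⟩ := dif_neg hi

theorem IsAME.exists_ne_zero [NeZero d] {ψ : (Fin n → Fin d) → ℂ} (hψ : IsAME n d ψ)
    {B : Finset (Fin n)} (hB : #B ≤ n / 2) (f : Fin n → Fin d) :
    ∃ s, ψ s ≠ 0 ∧ ∀ i ∈ B, s i = f i := by
  have hsum := hψ.2 B hB (fun i => f i) (fun i => f i)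
  rw [if_pos rfl] at hsum
  have hne : ((d : ℂ) ^ #B)⁻¹ ≠ 0 := inv_ne_zero (pow_ne_zero _ (NeZero.ne _))
  obtain ⟨a, -, ha⟩ := exists_ne_zero_of_sum_ne_zero (hsum.trans_ne hne)
  exact ⟨_, left_ne_zero_of_mul ha, fun i hi => combine_of_mem hi _ _⟩

theorem IsAME.isMDS_support [NeZero d] {ψ : (Fin n → Fin d) → ℂ} (hψ : IsAME n d ψ)
    (hmin : HasMinimalSupport n d ψ) : IsMDS (n / 2) ψ.support := by
  intro B hB f
  let restrict : ψ.support → B → Fin d := fun s i => s.1 i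
  have hsurj : Function.Surjective restrict := by
    intro g
    obtain ⟨s, hs, hsg⟩ := hψ.exists_ne_zero hB.le fun i => if h : i ∈ B then g ⟨i, h⟩ else f i
    exact ⟨⟨s, hs⟩, funext fun i => (hsg i i.2).trans (dif_pos i.2)⟩
  have hcard : Nat.card ψ.support = Nat.card (B → Fin d) := by
    rw [Nat.card_coe_set_eq, Nat.card_fun, Nat.card_fin, Nat.card_eq_fintype_card,
      Fintype.card_coe, hB]
    exact hmin
  obtain ⟨⟨s, hs⟩, hsf⟩ := hsurj fun i => f i
  refine ⟨s, ⟨hs, fun i hi => congrFun hsf ⟨i, hi⟩⟩, fun s' ⟨hs', hs'f⟩ => ?_⟩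
  have hinj := (hsurj.bijective_of_nat_card_le hcard.le).1
  exact congrArg Subtype.val (hinj (a₁ := ⟨s', hs'⟩) (a₂ := ⟨s, hs⟩)
    ((funext fun i : B => hs'f i i.2).trans hsf.symm))

/-- The state with equal amplitudes on the words of `C`, normalised for a code with `d ^ (n / 2)`
words. -/
def uniformState (C : Set (Fin n → Fin d)) (s : Fin n → Fin d) : ℂ :=
  if s ∈ C then ((√(d ^ (n / 2)))⁻¹ : ℝ) else 0

theorem uniformState_mul_conj (C : Set (Fin n → Fin d)) (s s' : Fin n → Fin d) :
    uniformState C s * starRingEnd ℂ (uniformState C s') =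
      if s ∈ C ∧ s' ∈ C then ((d : ℂ) ^ (n / 2))⁻¹ else 0 := by
  by_cases hs : s ∈ C <;> by_cases hs' : s' ∈ C <;>
    simp only [uniformState, hs, hs', if_true, if_false, Complex.conj_ofReal, map_zero, mul_zero,
      zero_mul, and_self, and_false, false_and]
  rw [← Complex.ofReal_mul, ← mul_inv, Real.mul_self_sqrt (by positivity)]
  push_cast
  rfl

theorem support_uniformState [NeZero d] (C : Set (Fin n → Fin d)) :
    {s | uniformState C s ≠ 0} = C := by
  have hpos : (0 : ℝ) < d ^ (n / 2) := pow_pos (Nat.cast_pos.2 (NeZero.pos d)) _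
  ext s
  simp [uniformState, (Real.sqrt_pos.2 hpos).ne']

theorem IsMDS.card_combine_mem [NeZero d] {k : ℕ} {C : Set (Fin n → Fin d)} (hC : IsMDS k C)
    (hk : k ≤ n) {B : Finset (Fin n)} (hB : #B ≤ k) (b : {i : Fin n // i ∈ B} → Fin d) :
    #{a : {i : Fin n // i ∉ B} → Fin d | combine B a b ∈ C} = d ^ (k - #B) := by
  have hinj : Function.Injective (combine B · b) := fun a a' h => funext fun i => by
    simpa only [combine_of_notMem i.2] using congrFun h i
  have himage : {c ∈ C | ∀ i ∈ B, c i = combine B 0 b i} =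
      (combine B · b) '' {a | combine B a b ∈ C} := by
    ext c
    constructor
    · rintro ⟨hc, hcB⟩
      have heq : combine B (fun i => c i) b = c := funext fun i => by
        by_cases hi : i ∈ B
        · rw [hcB i hi, combine_of_mem hi, combine_of_mem hi]
        · rw [combine_of_notMem hi]
      exact ⟨fun i => c i, by rwa [Set.mem_ofPred_eq, heq], heq⟩
    · rintro ⟨a, ha, rfl⟩
      exact ⟨ha, fun i hi => by simp only [combine_of_mem hi]⟩
  have hcount := hC.ncard_extensions hB (by rwa [Fintype.card_fin]) (combine B 0 b)
  rw [himage, Set.ncard_image_of_injective _ hinj, Fintype.card_fin] at hcount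
  rw [← hcount, ← Set.ncard_coe_finset, coe_filter_univ]

theorem IsMDS.isAME_uniformState [NeZero d] {C : Set (Fin n → Fin d)} (hC : IsMDS (n / 2) C) :
    IsAME n d (uniformState C) := by
  have hd : (d : ℂ) ≠ 0 := NeZero.ne _
  refine ⟨?_, fun B hB b b' => ?_⟩
  · have hcard : (#{s | s ∈ C} : ℝ) = d ^ (n / 2) := by
      rw [← Set.ncard_coe_finset, coe_filter_univ, Set.ofPred_mem_eq,
        hC.ncard_eq (by simpa using Nat.div_le_self n 2), Fintype.card_fin, Nat.cast_pow]
    have hnorm (s : Fin n → Fin d) :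
        ‖uniformState C s‖ ^ 2 = if s ∈ C then ((d : ℝ) ^ (n / 2))⁻¹ else 0 := by
      by_cases hs : s ∈ C <;> simp [uniformState, hs, abs_of_nonneg]
    simp only [hnorm, sum_ite, sum_const_zero, add_zero, sum_const, nsmul_eq_mul, hcard]
    exact mul_inv_cancel₀ (pow_ne_zero _ (NeZero.ne _))
  simp only [uniformState_mul_conj]
  split_ifs with hbb'
  · subst hbb'
    simp only [and_self, sum_ite, sum_const_zero, add_zero, sum_const, nsmul_eq_mul,
      hC.card_combine_mem (Nat.div_le_self n 2) hB]
    push_cast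
    rw [← div_eq_mul_inv, div_eq_iff (pow_ne_zero _ hd), pow_sub₀ _ hd hB, mul_comm]
  · refine sum_eq_zero fun a _ => if_neg fun ⟨h, h'⟩ => hbb' ?_
    have heq : combine B a b = combine B a b' := by
      refine hC.eq_of_eqOn h h' (s := Bᶜ) ?_ fun i hi => ?_
      · rw [card_compl, Fintype.card_fin]; omega
      · rw [combine_of_notMem (mem_compl.1 hi), combine_of_notMem (mem_compl.1 hi)]
    ext1 i
    simpa only [combine_of_mem i.2] using congrFun heq i

theorem IsMDS.hasMinimalSupport_uniformState [NeZero d] {C : Set (Fin n → Fin d)}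
    (hC : IsMDS (n / 2) C) : HasMinimalSupport n d (uniformState C) := by
  rw [HasMinimalSupport, support_uniformState, hC.ncard_eq (by simpa using Nat.div_le_self n 2),
    Fintype.card_fin]

end AME

section ReedSolomon

open Finset Polynomial

variable {F : Type*} [Field F]

/-- Evaluation of polynomials on the projective line over `F`: the value at infinity (`none`) is the
coefficient in degree `k`. On polynomials of degree at most `k` this is the encoder of the extended
Reed–Solomon code. -/
def projectiveEval (F : Type*) [Field F] (k : ℕ) : F[X] →ₗ[F] Option F → F :=
  LinearMap.pi fun o => o.elim (lcoeff F k) leval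

theorem eq_zero_of_projectiveEval_eq_zero {k : ℕ} {p : F[X]} (hp : p.degree < (k + 1 : ℕ))
    {s : Finset (Option F)} (hs : #s = k + 1) (h : ∀ o ∈ s, projectiveEval F k p o = 0) :
    p = 0 := by
  refine eq_zero_of_degree_lt_of_eval_finset_eq_zero (eraseNone s) ?_ fun x hx =>
    h (some x) (mem_eraseNone.1 hx)
  by_cases hnone : none ∈ s
  · rw [card_eraseNone_of_mem hnone, hs, Nat.add_sub_cancel]
    rw [degree_lt_iff_coeff_zero] at hp ⊢
    intro m hm
    obtain rfl | hm := hm.eq_or_lt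
    · exact h none hnone
    · exact hp m hm
  · rwa [card_eraseNone_of_not_mem hnone, hs]

theorem isMDS_image_projectiveEval (F : Type*) [Field F] (k : ℕ) :
    IsMDS (k + 1) (projectiveEval F k '' degreeLT F (k + 1)) := by
  intro s hs f
  let encode : degreeLT F (k + 1) →ₗ[F] s → F :=
    LinearMap.funLeft F F Subtype.val ∘ₗ projectiveEval F k ∘ₗ Submodule.subtype _
  have hinj : Function.Injective encode := (injective_iff_map_eq_zero _).2 fun p hp =>
    Subtype.ext <| eq_zero_of_projectiveEval_eq_zero (mem_degreeLT.1 p.2) hs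
      fun o ho => congrFun hp ⟨o, ho⟩
  have hrank : Module.finrank F (degreeLT F (k + 1)) = Module.finrank F (s → F) := by
    rw [(degreeLTEquiv F (k + 1)).finrank_eq, Module.finrank_fin_fun,
      Module.finrank_fintype_fun_eq_card, Fintype.card_coe, hs]
  have : FiniteDimensional F (degreeLT F (k + 1)) :=
    (degreeLTEquiv F (k + 1)).symm.finiteDimensional
  obtain ⟨p, hp⟩ := (LinearMap.injective_iff_surjective_of_finrank_eq_finrank hrank).1 hinj
    fun o => f o
  refine ⟨projectiveEval F k p, ⟨Set.mem_image_of_mem _ p.2, fun o ho => congrFun hp ⟨o, ho⟩⟩, ?_⟩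
  rintro _ ⟨⟨q, hq, rfl⟩, hqf⟩
  have : encode ⟨q, hq⟩ = encode p := by
    rw [hp]; exact funext fun o => hqf o o.2
  rw [← hinj this]

theorem exists_isMDS_of_prime (p : ℕ) [Fact p.Prime] (k : ℕ) :
    ∃ C : Set (Fin (p + 1) → Fin p), IsMDS (k + 1) C := by
  have e : Fin (p + 1) ≃ Option (ZMod p) := Fintype.equivOfCardEq (by simp)
  have g : ZMod p ≃ Fin p := Fintype.equivOfCardEq (by simp)
  exact ⟨_, (isMDS_image_projectiveEval (ZMod p) k).image_comp e g⟩

end ReedSolomon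

section SevenPoints

open Finset

/-- A *block* is a set of two or three points. -/
def IsBlock {ι : Type*} (x : Finset ι) : Prop := #x = 2 ∨ #x = 3

/-- A colouring of the blocks on seven points in which the blocks of each colour form a linear
space, every pair of points lying in exactly one of them, with at least two triples through every
point. -/
structure IsSpaceColouring {γ : Type*} (κ : Finset (Fin 7) → γ) : Prop where
  ne_of_two_le_card_inter : ∀ ⦃x y⦄, IsBlock x → IsBlock y → x ≠ y → 2 ≤ #(x ∩ y) → κ x ≠ κ y
  exists_block : ∀ z, #z = 2 → ∀ b, IsBlock b → ∃ x, IsBlock x ∧ z ⊆ x ∧ κ x = κ b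
  two_le_card_triples : ∀ i b, IsBlock b → 2 ≤ #{x | #x = 3 ∧ i ∈ x ∧ κ x = κ b}

/-- Four triples off the point `q`, with distinct colours, any two of which share at most one
point. -/
def IsRainbowPasch {γ : Type*} (κ : Finset (Fin 7) → γ) (q : Fin 7)
    (P : Finset (Finset (Fin 7))) : Prop :=
  #P = 4 ∧ (∀ x ∈ P, #x = 3 ∧ q ∉ x) ∧ (∀ x ∈ P, ∀ y ∈ P, x ≠ y → #(x ∩ y) ≤ 1) ∧
    Set.InjOn κ P

/-- The subset of `Fin 7` whose indicator bits are those of `m`. -/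
def points (m : ℕ) : Finset (Fin 7) := {i | m.testBit i}

/-- The codes `m < 128` of the `k`-subsets of `Fin 7`. -/
def codes (k : ℕ) : List ℕ :=
  (List.range 128).filter fun m => (List.range 7).countP (m.testBit ·) == k

/-- The codes of the blocks. -/
def blockCodes : List ℕ := codes 2 ++ codes 3

/-- Clearing the lowest bit of `m` leaves nothing, that is, `m` has at most one bit. -/
def hasAtMostOneBit (m : ℕ) : Bool := m &&& (m - 1) == 0

/-- A list of bit positions as a bitmask. Families of blocks are encoded in this way, the
block with code `i` being the bit `i`. -/
def ofBits (l : List ℕ) : ℕ := l.foldr (fun i m => 2 ^ i ||| m) 0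

/-- The sublists whose members are pairwise related by `r`. -/
def pairwiseSublists {α : Type*} (r : α → α → Bool) : List α → List (List α)
  | [] => [[]]
  | a :: l => pairwiseSublists r l ++
      ((pairwiseSublists r l).filter fun s => s.all (r a)).map (a :: ·)

/-- The bitmasks of the linear spaces with at least two triples through every point. -/
def spaces : List ℕ :=
  ((pairwiseSublists (fun a b => hasAtMostOneBit (a &&& b)) (codes 3)).filter fun l =>
    (List.range 7).all fun i => 2 ≤ l.countP (·.testBit i)).map fun l =>
      ofBits (((codes 2).filter fun p => l.all fun t => hasAtMostOneBit (p &&& t)) ++ l)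

/-- The bitmasks of the sets of four triples off `q` that pairwise share at most one point. -/
def pasches (q : ℕ) : List ℕ :=
  ((pairwiseSublists (fun a b => hasAtMostOneBit (a &&& b))
    ((codes 3).filter fun t => !t.testBit q)).filter fun l => l.length == 4).map ofBits

/-- Does every point have a rainbow Pasch, when the colour classes are the families `C`? -/
def hasRainbowPasches (C : List ℕ) : Bool :=
  (List.range 7).all fun q => (pasches q).any fun P => C.all fun s => hasAtMostOneBit (s &&& P)

/-- Exact cover search: can `C` be completed by members of `L`, pairwise disjoint as bitmasks,
to a list that covers all the given bits and passes the test `good`? The members of `L` are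
assumed to be disjoint from those of `C`. -/
def hasExactCover (good : List ℕ → Bool) : List ℕ → List ℕ → List ℕ → Bool
  | [], _, C => good C
  | i :: is, L, C =>
    if C.any (·.testBit i) then hasExactCover good is L C
    else L.any fun s => s.testBit i &&
      hasExactCover good is (L.filter fun t => t &&& s == 0) (s :: C)

-- The bits 3 and 5 are the pairs `{0, 1}` and `{0, 2}`.
set_option maxRecDepth 10000 in
theorem hasExactCover_eq_false : ∀ s ∈ spaces, s.testBit 3 → s.testBit 5 →
    hasExactCover hasRainbowPasches blockCodes
      (spaces.filter fun t => t &&& s == 0) [s] = false := by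
  have h : (spaces.all fun s => !(s.testBit 3 && s.testBit 5 && hasExactCover hasRainbowPasches
    blockCodes (spaces.filter fun t => t &&& s == 0) [s])) = true := by
    decide +kernel
  simpa [or_iff_not_imp_left] using h

theorem testBit_ofBits {l : List ℕ} {i : ℕ} : (ofBits l).testBit i ↔ i ∈ l := by
  induction l with
  | nil => simp [ofBits]
  | cons j l ih =>
    rw [show ofBits (j :: l) = 2 ^ j ||| ofBits l from rfl, Nat.testBit_or, Bool.or_eq_true, ih,
      Nat.testBit_two_pow, decide_eq_true_iff, List.mem_cons, eq_comm]

theorem hasAtMostOneBit_iff {m : ℕ} :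
    hasAtMostOneBit m ↔ ∀ i j, m.testBit i → m.testBit j → i = j := by
  obtain rfl | hm := eq_or_ne m 0
  · simp [hasAtMostOneBit]
  rw [hasAtMostOneBit, beq_iff_eq, Nat.and_sub_one_eq_zero_iff_isPowerOfTwo hm]
  constructor
  · rintro ⟨k, rfl⟩ i j hi hj
    simp only [Nat.testBit_two_pow, decide_eq_true_iff] at hi hj
    exact hi.symm.trans hj
  · intro h
    obtain ⟨k, hk⟩ := Nat.exists_testBit_of_ne_zero hm
    refine ⟨k, Nat.eq_of_testBit_eq fun i => ?_⟩
    rw [Nat.testBit_two_pow, Bool.eq_iff_iff, decide_eq_true_iff]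
    exact ⟨h k i hk, fun hki => hki ▸ hk⟩

theorem mem_points {m : ℕ} {i : Fin 7} : i ∈ points m ↔ m.testBit i := by simp [points]

theorem mem_codes {k m : ℕ} : m ∈ codes k ↔ m < 128 ∧ #(points m) = k := by
  have h : ∀ m < 128, (List.range 7).countP (m.testBit ·) = #(points m) := by decide +kernel
  simp only [codes, List.mem_filter, List.mem_range, beq_iff_eq]
  exact and_congr_right fun hm => by rw [h m hm]

theorem lt_seven_of_testBit {m i : ℕ} (hm : m < 128) (hi : m.testBit i) : i < 7 := by
  by_contra! h
  rw [Nat.testBit_lt_two_pow (hm.trans_le (Nat.pow_le_pow_right two_pos h))] at hi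
  exact Bool.false_ne_true hi

theorem points_injOn : Set.InjOn points {m | m < 128} := by
  have testBit_imp {m m' : ℕ} (hm : m < 128) (h : points m = points m') {i : ℕ}
      (hi : m.testBit i) : m'.testBit i := by
    have := mem_points (m := m) (i := ⟨i, lt_seven_of_testBit hm hi⟩)
    rw [h, mem_points] at this
    exact this.2 hi
  exact fun m hm m' hm' h => Nat.eq_of_testBit_eq fun i =>
    Bool.eq_iff_iff.2 ⟨testBit_imp hm h, testBit_imp hm' h.symm⟩

theorem exists_points_eq (x : Finset (Fin 7)) : ∃ m < 128, points m = x := by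
  revert x; decide +kernel

theorem hasAtMostOneBit_and_iff {a b : ℕ} (ha : a < 128) :
    hasAtMostOneBit (a &&& b) ↔ #(points a ∩ points b) ≤ 1 := by
  simp only [hasAtMostOneBit_iff, Finset.card_le_one, mem_inter, mem_points, Nat.testBit_and,
    Bool.and_eq_true]
  constructor
  · intro h i hi j hj
    exact Fin.ext (h i j hi hj)
  · intro h i j hi hj
    simpa using h ⟨i, lt_seven_of_testBit ha hi.1⟩ hi ⟨j, lt_seven_of_testBit ha hj.1⟩ hj

theorem codes_nodup (k : ℕ) : (codes k).Nodup := List.nodup_range.filter _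

theorem countP_codes (k : ℕ) (p : Finset (Fin 7) → Prop) [DecidablePred p] :
    (codes k).countP (fun m => p (points m)) = #{x : Finset (Fin 7) | #x = k ∧ p x} := by
  rw [List.countP_eq_length_filter, ← List.toFinset_card_of_nodup ((codes_nodup k).filter _)]
  refine Finset.card_nbij points (fun m hm => ?_) (fun m hm m' hm' => ?_) fun x hx => ?_
  · simp_all [mem_codes]
  · simp only [List.coe_toFinset, List.mem_filter, mem_codes, Set.mem_ofPred_eq] at hm hm'
    exact points_injOn hm.1.1 hm'.1.1
  · obtain ⟨m, hm, rfl⟩ := exists_points_eq x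
    exact ⟨m, by simp_all [mem_codes], rfl⟩

theorem mem_blockCodes {m : ℕ} : m ∈ blockCodes ↔ m < 128 ∧ IsBlock (points m) := by
  simp only [blockCodes, List.mem_append, mem_codes, IsBlock, and_or_left]

theorem mem_pairwiseSublists {α : Type*} {r : α → α → Bool} {s l : List α} (hs : s.Sublist l)
    (hr : s.Pairwise fun a b => r a b) : s ∈ pairwiseSublists r l := by
  induction hs with
  | slnil => simp [pairwiseSublists]
  | cons a _ ih => exact List.mem_append_left _ (ih hr)
  | cons_cons a _ ih =>
    rw [List.pairwise_cons] at hr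
    exact List.mem_append_right _ <| List.mem_map_of_mem <|
      List.mem_filter.2 ⟨ih hr.2, List.all_eq_true.2 hr.1⟩

theorem hasExactCover_of_disjoint {γ : Type*} {good : List ℕ → Bool} {S : γ → ℕ} {R : Set γ}
    (hS : ∀ c c', c ≠ c' → S c &&& S c' = 0) (hgood : ∀ cs : List γ, good (cs.map S)) :
    ∀ (is L : List ℕ) (cs : List γ), (∀ i ∈ is, ∃ c ∈ R, (S c).testBit i) →
      (∀ c ∈ R, c ∉ cs → S c ∈ L) → hasExactCover good is L (cs.map S) := by
  intro is
  induction is with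
  | nil => exact fun _ cs _ _ => hgood cs
  | cons i is ih =>
    intro L cs hcover hL
    rw [List.forall_mem_cons] at hcover
    rw [hasExactCover]
    split_ifs with hi
    · exact ih L cs hcover.2 hL
    obtain ⟨c, hcR, hc⟩ := hcover.1
    have hcs : c ∉ cs := fun h => hi <| List.any_eq_true.2 ⟨S c, List.mem_map_of_mem h, hc⟩
    refine List.any_eq_true.2 ⟨S c, hL c hcR hcs, ?_⟩
    rw [Bool.and_eq_true]
    refine ⟨hc, ih _ (c :: cs) hcover.2 fun c' hc'R hnotMem => ?_⟩
    rw [List.mem_cons, not_or] at hnotMem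
    exact List.mem_filter.2
      ⟨hL c' hc'R hnotMem.2, by rw [beq_iff_eq, hS c' c hnotMem.1]⟩

/-- The bitmask of the blocks of colour `c`. -/
def colourMask {γ : Type*} (κ : Finset (Fin 7) → γ) (c : γ) : ℕ :=
  ofBits (blockCodes.filter fun m => κ (points m) = c)

section

variable {γ : Type*} {κ : Finset (Fin 7) → γ}

theorem testBit_colourMask {c : γ} {m : ℕ} :
    (colourMask κ c).testBit m ↔ m ∈ blockCodes ∧ κ (points m) = c := by
  simp [colourMask, testBit_ofBits]

theorem colourMask_and_eq_zero {c c' : γ} (hc : c ≠ c') :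
    colourMask κ c &&& colourMask κ c' = 0 := by
  refine Nat.eq_of_testBit_eq fun m => ?_
  rw [Nat.zero_testBit, Bool.eq_false_iff, Nat.testBit_and, ne_eq, Bool.and_eq_true,
    testBit_colourMask, testBit_colourMask]
  exact fun h => hc (h.1.2.symm.trans h.2.2)

theorem hasRainbowPasches_map_colourMask (hκ : ∀ q, ∃ P, IsRainbowPasch κ q P) (cs : List γ) :
    hasRainbowPasches (cs.map (colourMask κ)) := by
  refine List.all_eq_true.2 fun q hq => ?_
  obtain ⟨P, hcard, htriple, hinter, hinj⟩ := hκ ⟨q, List.mem_range.1 hq⟩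
  set l := ((codes 3).filter fun t => !t.testBit q).filter fun t => points t ∈ P with hl
  have hmem {t : ℕ} (ht : t ∈ l) : t < 128 ∧ points t ∈ P := by
    simp only [hl, List.mem_filter, mem_codes, decide_eq_true_iff] at ht
    exact ⟨ht.1.1.1, ht.2⟩
  have hnodup : l.Nodup := ((codes_nodup 3).filter _).filter _
  have hlength : l.length = 4 := by
    have := countP_codes 3 fun x => x ∈ P ∧ ⟨q, List.mem_range.1 hq⟩ ∉ x
    rw [hl, ← List.countP_eq_length_filter, List.countP_filter, ← hcard]
    convert this using 2
    · simp [mem_points]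
    · ext x
      simpa using ⟨fun hx => ⟨(htriple x hx).1, hx, (htriple x hx).2⟩, fun hx => hx.2.1⟩
  have hpasch : ofBits l ∈ pasches q := by
    refine List.mem_map_of_mem <| List.mem_filter.2
      ⟨mem_pairwiseSublists List.filter_sublist ?_, by rwa [beq_iff_eq]⟩
    refine hnodup.imp_of_mem fun {a b} ha hb hab => ?_
    rw [hasAtMostOneBit_and_iff (hmem ha).1]
    exact hinter _ (hmem ha).2 _ (hmem hb).2 fun h => hab (points_injOn (hmem ha).1 (hmem hb).1 h)
  refine List.any_eq_true.2 ⟨ofBits l, hpasch, List.all_eq_true.2 fun s hs => ?_⟩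
  obtain ⟨c, -, rfl⟩ := List.mem_map.1 hs
  simp only [hasAtMostOneBit_iff, Nat.testBit_and, Bool.and_eq_true, testBit_colourMask,
    testBit_ofBits]
  rintro i j ⟨⟨-, hi⟩, hil⟩ ⟨⟨-, hj⟩, hjl⟩
  exact points_injOn (hmem hil).1 (hmem hjl).1
    (hinj (hmem hil).2 (hmem hjl).2 (hi.trans hj.symm))

theorem IsSpaceColouring.filter_pairs_eq (h : IsSpaceColouring κ) {c : γ}
    (hc : c ∈ κ '' {b | IsBlock b}) :
    (codes 2).filter (fun p => ((codes 3).filter fun m => κ (points m) = c).all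
      fun t => hasAtMostOneBit (p &&& t)) = (codes 2).filter fun m => κ (points m) = c := by
  obtain ⟨b, hb, rfl⟩ := hc
  refine List.filter_congr fun p hp => ?_
  rw [mem_codes] at hp
  rw [Bool.eq_iff_iff]
  simp only [List.all_eq_true, decide_eq_true_iff, List.mem_filter, mem_codes,
    hasAtMostOneBit_and_iff hp.1]
  constructor
  · intro hall
    obtain ⟨x, hx | hx, hpx, hxc⟩ := h.exists_block _ hp.2 b hb
    · rwa [Finset.eq_of_subset_of_card_le hpx (hx.trans hp.2.symm).le]
    · obtain ⟨t, ht, rfl⟩ := exists_points_eq x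
      have := hall t ⟨⟨ht, hx⟩, hxc⟩
      rw [Finset.inter_eq_left.2 hpx] at this
      omega
  · rintro hpc t ⟨⟨-, ht⟩, htc⟩
    by_contra! hlt
    refine h.ne_of_two_le_card_inter (.inl hp.2) (.inr ht) (fun heq => ?_) hlt (hpc.trans htc.symm)
    rw [heq] at hp
    omega

theorem IsSpaceColouring.colourMask_mem_spaces (h : IsSpaceColouring κ) {c : γ}
    (hc : c ∈ κ '' {b | IsBlock b}) :
    colourMask κ c ∈ spaces := by
  set l := (codes 3).filter fun m => κ (points m) = c with hl
  have hmem {m : ℕ} : m ∈ l ↔ (m < 128 ∧ #(points m) = 3) ∧ κ (points m) = c := by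
    simp [hl, mem_codes]
  refine List.mem_map.2 ⟨l, List.mem_filter.2 ⟨mem_pairwiseSublists List.filter_sublist ?_, ?_⟩, ?_⟩
  · refine ((codes_nodup 3).filter _).imp_of_mem fun {a b} ha hb hab => ?_
    rw [hasAtMostOneBit_and_iff (hmem.1 ha).1.1]
    by_contra! hlt
    exact h.ne_of_two_le_card_inter (.inr (hmem.1 ha).1.2) (.inr (hmem.1 hb).1.2)
      (fun heq => hab (points_injOn (hmem.1 ha).1.1 (hmem.1 hb).1.1 heq)) hlt
      ((hmem.1 ha).2.trans (hmem.1 hb).2.symm)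
  · refine List.all_eq_true.2 fun i hi => ?_
    obtain ⟨b, hb, rfl⟩ := hc
    have hcount := countP_codes 3 fun x => ⟨i, List.mem_range.1 hi⟩ ∈ x ∧ κ x = κ b
    rw [decide_eq_true_iff, hl, List.countP_filter]
    refine (h.two_le_card_triples ⟨i, List.mem_range.1 hi⟩ b hb).trans_eq (hcount.symm.trans ?_)
    simp [mem_points]
  · rw [h.filter_pairs_eq hc, ← List.filter_append]
    rfl

theorem IsSpaceColouring.not_forall_exists_isRainbowPasch (h : IsSpaceColouring κ)
    (hpath : κ {0, 1} = κ {0, 2}) : ¬ ∀ q, ∃ P, IsRainbowPasch κ q P := by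
  intro hpasch
  have hc : κ {0, 1} ∈ κ '' {b | IsBlock b} := ⟨{0, 1}, .inl rfl, rfl⟩
  set c := κ {0, 1}
  have hbit3 : (colourMask κ c).testBit 3 := testBit_colourMask.2
    ⟨by decide +kernel, by rw [show points 3 = {0, 1} by decide +kernel]⟩
  have hbit5 : (colourMask κ c).testBit 5 := testBit_colourMask.2
    ⟨by decide +kernel, by rw [show points 5 = {0, 2} by decide +kernel, hpath]⟩
  have hcover : hasExactCover hasRainbowPasches blockCodes
      (spaces.filter fun t => t &&& colourMask κ c == 0) [colourMask κ c] := by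
    refine hasExactCover_of_disjoint (S := colourMask κ) (R := κ '' {b | IsBlock b})
      (fun _ _ => colourMask_and_eq_zero) (hasRainbowPasches_map_colourMask hpasch) _ _ [c]
      (fun i hi => ?_) fun c' hc' hne => ?_
    · exact ⟨κ (points i), Set.mem_image_of_mem κ (mem_blockCodes.1 hi).2,
        testBit_colourMask.2 ⟨hi, rfl⟩⟩
    · rw [List.mem_singleton] at hne
      exact List.mem_filter.2
        ⟨h.colourMask_mem_spaces hc', by rw [beq_iff_eq, colourMask_and_eq_zero hne]⟩
  rw [hasExactCover_eq_false _ (h.colourMask_mem_spaces hc) hbit3 hbit5] at hcover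
  exact Bool.false_ne_true hcover

end

end SevenPoints

section DeepHole

open Finset

/-- The positions at which two words agree. -/
def agreement {ι α : Type*} [Fintype ι] (f g : ι → α) : Finset ι := {i | f i = g i}

theorem mem_agreement {ι α : Type*} [Fintype ι] {f g : ι → α} {i : ι} :
    i ∈ agreement f g ↔ f i = g i := by simp [agreement]

/-- `w` is a deep hole of the three-dimensional MDS code `D`, whose length exceeds the size of the
alphabet by one: no word of `D` agrees with `w` more often than interpolation forces. -/
structure IsDeepHole {ι α : Type*} [Fintype ι] [Fintype α] (D : Set (ι → α)) (w : ι → α) :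
    Prop where
  isMDS : IsMDS 3 D
  card_eq : Fintype.card ι = Fintype.card α + 1
  card_agreement_le : ∀ d ∈ D, #(agreement w d) ≤ 3

/-- The word of `D` that agrees with `w` exactly on the block `x`; the junk value `w` if there is
none. -/
def blockWord {ι α : Type*} [Fintype ι] (D : Set (ι → α)) (w : ι → α) (x : Finset ι) : ι → α :=
  if h : ∃ d ∈ D, agreement w d = x then h.choose else w

/-- The points that form, together with `i`, a pair off `p` whose word takes the value `a` at
`p`. -/
def mates {ι α : Type*} [Fintype ι] (D : Set (ι → α)) (w : ι → α) (p i : ι) (a : α) : Finset ι :=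
  {k | k ≠ i ∧ k ≠ p ∧ blockWord D w {i, k} p = a}

/-- The triples through `i` and off `p` whose word takes the value `a` at `p`. -/
def triplesThrough {ι α : Type*} [Fintype ι] (D : Set (ι → α)) (w : ι → α) (p i : ι) (a : α) :
    Finset (Finset ι) :=
  {x | #x = 3 ∧ i ∈ x ∧ p ∉ x ∧ blockWord D w x p = a}

theorem mem_mates {ι α : Type*} [Fintype ι] {D : Set (ι → α)} {w : ι → α} {p i k : ι} {a : α} :
    k ∈ mates D w p i a ↔ k ≠ i ∧ k ≠ p ∧ blockWord D w {i, k} p = a := by simp [mates]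

theorem mem_triplesThrough {ι α : Type*} [Fintype ι] {D : Set (ι → α)} {w : ι → α} {p i : ι}
    {a : α} {x : Finset ι} : x ∈ triplesThrough D w p i a ↔
      #x = 3 ∧ i ∈ x ∧ p ∉ x ∧ blockWord D w x p = a := by simp [triplesThrough]

namespace IsDeepHole

variable {ι α : Type*} [Fintype ι] [Fintype α] {D : Set (ι → α)} {w : ι → α}

theorem agreement_eq_of_card_eq_three (h : IsDeepHole D w) {d : ι → α} (hd : d ∈ D) {x : Finset ι}
    (hx : #x = 3) (hdx : ∀ i ∈ x, d i = w i) : agreement w d = x :=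
  (eq_of_subset_of_card_le (fun i hi => mem_agreement.2 (hdx i hi).symm)
    (hx ▸ h.card_agreement_le d hd)).symm

theorem existsUnique_agreement_eq_triple (h : IsDeepHole D w) {x : Finset ι} (hx : #x = 3) :
    ∃! d, d ∈ D ∧ agreement w d = x := by
  obtain ⟨d, ⟨hd, hdx⟩, huniq⟩ := h.isMDS x hx w
  refine ⟨d, ⟨hd, h.agreement_eq_of_card_eq_three hd hx hdx⟩, ?_⟩
  rintro d' ⟨hd', rfl⟩
  exact huniq d' ⟨hd', fun i hi => (mem_agreement.1 hi).symm⟩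

theorem exists_agreement_eq_insert (h : IsDeepHole D w) {d : ι → α} (hd : d ∈ D) {x : Finset ι}
    (hx : #x = 2) (hdx : ∀ i ∈ x, d i = w i) (hne : agreement w d ≠ x) :
    ∃ k ∉ x, agreement w d = insert k x := by
  have hsub : x ⊆ agreement w d := fun i hi => mem_agreement.2 (hdx i hi).symm
  obtain ⟨k, hk, hkx⟩ := exists_of_ssubset (hsub.ssubset_of_ne hne.symm)
  refine ⟨k, hkx, h.agreement_eq_of_card_eq_three hd (by rw [card_insert_of_notMem hkx, hx]) ?_⟩
  exact (forall_mem_insert _ _ _).2 ⟨(mem_agreement.1 hk).symm, hdx⟩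

-- The words meeting `w` once more are indexed by the further point.
theorem card_filter_agreement_ne (h : IsDeepHole D w) {x : Finset ι} (hx : #x = 2) :
    #{d | (d ∈ D ∧ ∀ i ∈ x, d i = w i) ∧ agreement w d ≠ x} + 2 = Fintype.card ι := by
  have hinsert (k : ↥xᶜ) : #(insert k.1 x) = 3 := by
    rw [card_insert_of_notMem (mem_compl.1 k.2), hx]
  choose t htD ht using fun k : ↥xᶜ => (h.existsUnique_agreement_eq_triple (hinsert k)).exists
  have ht_inj : Function.Injective t := fun k k' hkk' => by
    have : insert k.1 x = insert k'.1 x := by rw [← ht k, ← ht k', hkk']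
    exact Subtype.ext ((insert_inj (mem_compl.1 k.2)).1 this)
  have himage : ({d | (d ∈ D ∧ ∀ i ∈ x, d i = w i) ∧ agreement w d ≠ x} : Finset (ι → α)) =
      univ.image t := by
    ext d
    simp only [mem_filter, mem_univ, true_and, mem_image]
    constructor
    · rintro ⟨⟨hd, hdx⟩, hne⟩
      obtain ⟨k, hk, hdk⟩ := h.exists_agreement_eq_insert hd hx hdx hne
      exact ⟨⟨k, mem_compl.2 hk⟩, (h.existsUnique_agreement_eq_triple (hinsert _)).unique
        ⟨htD _, ht _⟩ ⟨hd, hdk⟩⟩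
    · rintro ⟨k, rfl⟩
      refine ⟨⟨htD k, fun i hi => ?_⟩, fun heq => mem_compl.1 k.2 <|
        heq.subset (ht k ▸ mem_insert_self _ _)⟩
      exact (mem_agreement.1 ((ht k).symm ▸ mem_insert_of_mem hi)).symm
  rw [himage, card_image_of_injective _ ht_inj, card_univ, Fintype.card_coe, ← hx,
    card_compl_add_card]

-- Of the `card α` words through `w` on `x`, all but one meet `w` once more.
theorem existsUnique_agreement_eq_pair (h : IsDeepHole D w) [Nontrivial α] {x : Finset ι}
    (hx : #x = 2) : ∃! d, d ∈ D ∧ agreement w d = x := by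
  have hcard := h.card_eq
  have hα := Fintype.one_lt_card (α := α)
  have hthrough : #{d | d ∈ D ∧ ∀ i ∈ x, d i = w i} = Fintype.card α := by
    have := h.isMDS.ncard_extensions (s := x) (by omega) (by omega) w
    rwa [hx, pow_one, ← coe_filter_univ, Set.ncard_coe_finset] at this
  have hsplit : #{d | (d ∈ D ∧ ∀ i ∈ x, d i = w i) ∧ agreement w d = x} +
      #{d | (d ∈ D ∧ ∀ i ∈ x, d i = w i) ∧ agreement w d ≠ x} = Fintype.card α := by
    rw [← hthrough, ← card_filter_add_card_filter_not (agreement w · = x)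
      (s := {d | d ∈ D ∧ ∀ i ∈ x, d i = w i}), filter_filter, filter_filter]
  have hexact : #{d | (d ∈ D ∧ ∀ i ∈ x, d i = w i) ∧ agreement w d = x} = 1 := by
    have := h.card_filter_agreement_ne hx
    omega
  obtain ⟨d, hd, huniq⟩ := (card_eq_one_iff_existsUnique).1 hexact
  simp only [mem_filter, mem_univ, true_and] at hd huniq
  refine ⟨d, ⟨hd.1.1, hd.2⟩, fun d' ⟨hd', hd'x⟩ => huniq d' ⟨⟨hd', fun i hi => ?_⟩, hd'x⟩⟩
  exact (mem_agreement.1 (hd'x.symm ▸ hi)).symm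

theorem existsUnique_agreement_eq (h : IsDeepHole D w) [Nontrivial α] {x : Finset ι}
    (hx : IsBlock x) : ∃! d, d ∈ D ∧ agreement w d = x :=
  hx.elim h.existsUnique_agreement_eq_pair h.existsUnique_agreement_eq_triple

theorem blockWord_spec (h : IsDeepHole D w) [Nontrivial α] {x : Finset ι} (hx : IsBlock x) :
    blockWord D w x ∈ D ∧ agreement w (blockWord D w x) = x := by
  have hex := (h.existsUnique_agreement_eq hx).exists
  rw [blockWord, dif_pos hex]
  exact hex.choose_spec

theorem blockWord_agreement (h : IsDeepHole D w) [Nontrivial α] {d : ι → α} (hd : d ∈ D)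
    (hx : IsBlock (agreement w d)) : blockWord D w (agreement w d) = d :=
  (h.existsUnique_agreement_eq hx).unique (h.blockWord_spec hx) ⟨hd, rfl⟩

theorem blockWord_apply_eq_iff (h : IsDeepHole D w) [Nontrivial α] {x : Finset ι} (hx : IsBlock x)
    {i : ι} : blockWord D w x i = w i ↔ i ∈ x := by
  rw [eq_comm, ← mem_agreement, (h.blockWord_spec hx).2]

theorem eq_of_blockWord_eqOn (h : IsDeepHole D w) [Nontrivial α] {x y s : Finset ι}
    (hx : IsBlock x) (hy : IsBlock y) (hs : 3 ≤ #s)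
    (hxy : ∀ i ∈ s, blockWord D w x i = blockWord D w y i) : x = y := by
  rw [← (h.blockWord_spec hx).2, ← (h.blockWord_spec hy).2,
    h.isMDS.eq_of_eqOn (h.blockWord_spec hx).1 (h.blockWord_spec hy).1 hs hxy]

theorem eqOn_inter (h : IsDeepHole D w) [Nontrivial α] {x y : Finset ι} (hx : IsBlock x)
    (hy : IsBlock y) {i : ι} (hi : i ∈ x ∩ y) : blockWord D w x i = blockWord D w y i := by
  rw [mem_inter] at hi
  rw [(h.blockWord_apply_eq_iff hx).2 hi.1, (h.blockWord_apply_eq_iff hy).2 hi.2]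

theorem eq_of_blockWord_apply_eq (h : IsDeepHole D w) [Nontrivial α] {x y : Finset ι}
    (hx : IsBlock x) (hy : IsBlock y) (hinter : 2 ≤ #(x ∩ y)) {p : ι} (hp : p ∉ x)
    (heq : blockWord D w x p = blockWord D w y p) : x = y := by
  have hp' : p ∉ x ∩ y := fun h => hp (mem_inter.1 h).1
  refine h.eq_of_blockWord_eqOn hx hy (s := insert p (x ∩ y)) ?_ ?_
  · rw [card_insert_of_notMem hp']
    omega
  · exact (forall_mem_insert _ _ _).2 ⟨heq, fun _ => h.eqOn_inter hx hy⟩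

theorem exists_block (h : IsDeepHole D w) [Nontrivial α] {z : Finset ι} (hz : #z = 2) {p : ι}
    (hp : p ∉ z) {a : α} (ha : a ≠ w p) :
    ∃ x, IsBlock x ∧ z ⊆ x ∧ p ∉ x ∧ blockWord D w x p = a := by
  obtain ⟨d, ⟨hd, hdz⟩, -⟩ := h.isMDS (insert p z) (by rw [card_insert_of_notMem hp, hz])
    (Function.update w p a)
  rw [forall_mem_insert, Function.update_self] at hdz
  have hsub : z ⊆ agreement w d := fun i hi => by
    rw [mem_agreement, hdz.2 i hi, Function.update_of_ne (ne_of_mem_of_not_mem hi hp)]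
  have hblock : IsBlock (agreement w d) := by
    have := card_le_card hsub
    have := h.card_agreement_le d hd
    unfold IsBlock
    omega
  refine ⟨_, hblock, hsub, ?_, by rw [h.blockWord_agreement hd hblock, hdz.1]⟩
  rw [mem_agreement, hdz.1]
  exact ha.symm

theorem compl_pair_eq_union (h : IsDeepHole D w) [Nontrivial α] {p i : ι} (hip : i ≠ p) {a : α}
    (ha : a ≠ w p) : ({i, p}ᶜ : Finset ι) =
      mates D w p i a ∪ (triplesThrough D w p i a).biUnion (·.erase i) := by
  ext k
  simp only [mem_compl, mem_insert, mem_singleton, not_or, mem_union, mem_biUnion, mem_erase,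
    mem_mates, mem_triplesThrough, ← ne_eq]
  constructor
  · rintro ⟨hki, hkp⟩
    obtain ⟨x, hx | hx, hsub, hp, rfl⟩ := h.exists_block (card_pair hki.symm)
      (p := p) (by simp [hip.symm, hkp.symm]) ha
    · rw [eq_of_subset_of_card_le hsub (by rw [hx, card_pair hki.symm])]
      exact .inl ⟨hki, hkp, rfl⟩
    · exact .inr ⟨x, ⟨hx, hsub (by simp), hp, rfl⟩, hki, hsub (by simp)⟩
  · rintro (⟨hki, hkp, -⟩ | ⟨x, ⟨-, -, hp, -⟩, hki, hkx⟩)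
    exacts [⟨hki, hkp⟩, ⟨hki, ne_of_mem_of_not_mem hkx hp⟩]

theorem card_mates_add (h : IsDeepHole D w) [Nontrivial α] {p i : ι} (hip : i ≠ p) {a : α}
    (ha : a ≠ w p) :
    #(mates D w p i a) + 2 * #(triplesThrough D w p i a) + 2 = Fintype.card ι := by
  have two_le_card_inter {x y : Finset ι} {k : ι} (hix : i ∈ x) (hiy : i ∈ y) (hki : k ≠ i)
      (hkx : k ∈ x) (hky : k ∈ y) : 2 ≤ #(x ∩ y) :=
    one_lt_card.2 ⟨i, mem_inter.2 ⟨hix, hiy⟩, k, mem_inter.2 ⟨hkx, hky⟩, hki.symm⟩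
  have hdisj : Disjoint (mates D w p i a) ((triplesThrough D w p i a).biUnion (·.erase i)) := by
    simp only [disjoint_left, mem_biUnion, mem_erase, mem_mates, mem_triplesThrough]
    rintro k ⟨-, -, hk⟩ ⟨x, ⟨hx, hix, hpx, hxa⟩, hki, hkx⟩
    have hpair : #{i, k} = 2 := card_pair hki.symm
    rw [h.eq_of_blockWord_apply_eq (.inr hx) (.inl hpair)
      (two_le_card_inter hix (by simp) hki hkx (by simp)) hpx (hxa.trans hk.symm), hpair] at hx
    omega
  have hdisj_triples :
      (triplesThrough D w p i a : Set (Finset ι)).PairwiseDisjoint (·.erase i) := by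
    simp only [Set.PairwiseDisjoint, Set.Pairwise, mem_coe, mem_triplesThrough, Function.onFun,
      disjoint_left, mem_erase]
    rintro x ⟨hx, hix, hpx, hxa⟩ y ⟨hy, hiy, -, hya⟩ hxy k ⟨hki, hkx⟩ ⟨-, hky⟩
    exact hxy <| h.eq_of_blockWord_apply_eq (.inr hx) (.inr hy)
      (two_le_card_inter hix hiy hki hkx hky) hpx (hxa.trans hya.symm)
  have hcard : ∀ x ∈ triplesThrough D w p i a, #(x.erase i) = 2 := fun x hx => by
    rw [mem_triplesThrough] at hx
    rw [card_erase_of_mem hx.2.1, hx.1]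
  have htotal := card_add_card_compl {i, p}
  rw [h.compl_pair_eq_union hip ha, card_union_of_disjoint hdisj, card_biUnion hdisj_triples,
    sum_const_nat hcard, card_pair hip] at htotal
  omega

theorem exists_mate_ne (h : IsDeepHole D w) [Nontrivial α] (hα : Odd (Fintype.card α)) {p i j : ι}
    (hip : i ≠ p) {a : α} (ha : a ≠ w p) (hj : j ∈ mates D w p i a) :
    ∃ k ∈ mates D w p i a, k ≠ j := by
  have hcount := h.card_mates_add hip ha
  have hcard := h.card_eq
  obtain ⟨m, hm⟩ := hα
  have : 0 < #(mates D w p i a) := card_pos.2 ⟨j, hj⟩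
  exact exists_mem_ne (by omega) j

theorem eq_of_mem_mates (h : IsDeepHole D w) [Nontrivial α] {p p' i j k : ι} (hij : i ≠ j)
    (hjk : k ≠ j) (hp : p ∉ ({i, j} : Finset ι)) (hp' : p' ∉ ({i, j} : Finset ι))
    (hk : k ∈ mates D w p i (blockWord D w {i, j} p))
    (hk' : k ∈ mates D w p' i (blockWord D w {i, j} p')) : p = p' := by
  rw [mem_mates] at hk hk'
  by_contra hpp'
  have heq : ({i, k} : Finset ι) = {i, j} := by
    refine h.eq_of_blockWord_eqOn (s := {i, p, p'}) (.inl (card_pair hk.1.symm))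
      (.inl (card_pair hij)) ?_ ?_
    · rw [card_eq_three.2 ⟨i, p, p', by grind, by grind, hpp', rfl⟩]
    · simp only [forall_mem_insert, mem_singleton, forall_eq]
      exact ⟨h.eqOn_inter (.inl (card_pair hk.1.symm)) (.inl (card_pair hij)) (by simp),
        hk.2.2, hk'.2.2⟩
  have : k ∈ ({i, j} : Finset ι) := heq ▸ mem_insert_of_mem (mem_singleton_self k)
  grind

-- Sending each point `p'` to a mate of `j` there is an injection of the remaining points into
-- themselves, hence onto: every point is a mate of `j` at one place only, and `j` has one mate `p`.
theorem card_mates_le_two (h : IsDeepHole D w) [Nontrivial α] (hα : Odd (Fintype.card α)) {p i : ι}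
    (hip : i ≠ p) {a : α} (ha : a ≠ w p) : #(mates D w p i a) ≤ 2 := by
  obtain hempty | ⟨j, hj⟩ := (mates D w p i a).eq_empty_or_nonempty
  · rw [hempty, card_empty]
    exact Nat.zero_le 2
  obtain ⟨hji, hjp, rfl⟩ := mem_mates.1 hj
  have hmate (p' : ↥({i, j} : Finset ι)ᶜ) :
      ∃ k ∈ mates D w p' i (blockWord D w {i, j} p'), k ≠ j := by
    have hp' := mem_compl.1 p'.2
    refine h.exists_mate_ne hα (by grind) ?_ (mem_mates.2 ⟨hji, by grind, rfl⟩)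
    rwa [ne_eq, h.blockWord_apply_eq_iff (.inl (card_pair hji.symm))]
  choose f hf hfj using hmate
  have hf_mem p' : f p' ∈ ({i, j} : Finset ι)ᶜ := by
    have := (mem_mates.1 (hf p')).1
    have := hfj p'
    simp_all
  let g (p' : ↥({i, j} : Finset ι)ᶜ) : ↥({i, j} : Finset ι)ᶜ := ⟨f p', hf_mem p'⟩
  have hg : Function.Surjective g := Finite.surjective_of_injective fun p' p'' hpp => by
    have hfp : f p' = f p'' := congrArg Subtype.val hpp
    exact Subtype.ext <| h.eq_of_mem_mates hji.symm (hfj p') (mem_compl.1 p'.2)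
      (mem_compl.1 p''.2) (hf p') (hfp ▸ hf p'')
  have hp : p ∈ ({i, j} : Finset ι)ᶜ := by simp [hip.symm, hjp.symm]
  suffices mates D w p i (blockWord D w {i, j} p) ⊆ {j, f ⟨p, hp⟩} from
    (card_le_card this).trans card_le_two
  intro k hk
  by_cases hkj : k = j
  · simp [hkj]
  obtain ⟨p', hp'⟩ := hg ⟨k, by have := mem_mates.1 hk; simp_all⟩
  obtain rfl : f p' = k := congrArg Subtype.val hp'
  have : (p' : ι) = p := h.eq_of_mem_mates hji.symm hkj (mem_compl.1 p'.2) (mem_compl.1 hp)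
    (hf p') hk
  subst this
  simp

end IsDeepHole

end DeepHole

section LengthBound

open Finset

theorem inter_nonempty_of_card_inter_le_one {ι : Type*} [DecidableEq ι] {s : Finset ι}
    (hs : #s = 6) {P : Finset (Finset ι)} (hP : 3 ≤ #P) (htriple : ∀ x ∈ P, #x = 3 ∧ x ⊆ s)
    (hinter : ∀ x ∈ P, ∀ y ∈ P, x ≠ y → #(x ∩ y) ≤ 1) {x y : Finset ι} (hx : x ∈ P) (hy : y ∈ P) :
    (x ∩ y).Nonempty := by
  by_contra hempty
  rw [not_nonempty_iff_eq_empty, ← disjoint_iff_inter_eq_empty] at hempty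
  have hunion : x ∪ y = s := eq_of_subset_of_card_le
    (union_subset (htriple x hx).2 (htriple y hy).2) (by
      rw [card_union_of_disjoint hempty, (htriple x hx).1, (htriple y hy).1, hs])
  obtain ⟨z, hz, hzxy⟩ : ∃ z ∈ P, z ∉ ({x, y} : Finset (Finset ι)) :=
    exists_mem_notMem_of_card_lt_card (card_le_two.trans_lt hP)
  simp only [mem_insert, mem_singleton, not_or] at hzxy
  have hz_union : z = z ∩ x ∪ z ∩ y := by
    rw [← inter_union_distrib_left, hunion, inter_eq_left.2 (htriple z hz).2]
  have := (congrArg card hz_union).trans_le (card_union_le _ _)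
  have := hinter z hz x hx hzxy.1
  have := hinter z hz y hy hzxy.2
  have := (htriple z hz).1
  omega

theorem exists_embedding_map_univ_eq {ι : Type*} [Fintype ι] (hι : Fintype.card ι = 8)
    {p i j k : ι} (hip : i ≠ p) (hjp : j ≠ p) (hkp : k ≠ p) (hij : i ≠ j) (hik : i ≠ k)
    (hjk : j ≠ k) : ∃ ρ : Fin 7 ↪ ι, univ.map ρ = {p}ᶜ ∧ ρ 0 = i ∧ ρ 1 = j ∧ ρ 2 = k := by
  have hcard : #({p}ᶜ : Finset ι) = 7 := by rw [card_compl, hι, card_singleton]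
  obtain ⟨g, hg⟩ := exists_equiv_extend_of_card_eq (s := {0, 1, 2}) (f := ![i, j, k, i, i, i, i])
    (show Fintype.card (Fin 7) = _ from hcard.symm)
    (by simp [image_insert, hip.symm, hjp.symm, hkp.symm])
    (by simp [Set.InjOn, hij, hik, hjk, hij.symm, hik.symm, hjk.symm])
  refine ⟨g.toEmbedding.trans (.subtype _), ?_, hg 0 (by simp), hg 1 (by simp), hg 2 (by simp)⟩
  rw [← map_map, map_univ_equiv, univ_eq_attach, attach_map_val]

namespace IsDeepHole

variable {ι α : Type*} [Fintype ι] [Fintype α] [Nontrivial α] {D : Set (ι → α)} {w : ι → α}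

-- At `ρ q` only six values occur on the twenty triples off `q`.
theorem exists_four_triples_of_apply_eq (h : IsDeepHole D w) (hα : Fintype.card α = 7)
    (ρ : Fin 7 ↪ ι) (q : Fin 7) : ∃ P : Finset (Finset (Fin 7)), #P = 4 ∧
      (∀ x ∈ P, #x = 3 ∧ q ∉ x) ∧ ∃ a, ∀ x ∈ P, blockWord D w (x.map ρ) (ρ q) = a := by
  let S : Finset (Finset (Fin 7)) := powersetCard 3 (univ.erase q)
  have hS {x : Finset (Fin 7)} (hx : x ∈ S) : #x = 3 ∧ q ∉ x := by
    simpa [S, subset_erase, and_comm] using hx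
  have hmaps : ∀ x ∈ S, blockWord D w (x.map ρ) (ρ q) ∈ univ.erase (w (ρ q)) := fun x hx => by
    have hblock : IsBlock (x.map ρ) := .inr ((card_map ρ).trans (hS hx).1)
    simp [h.blockWord_apply_eq_iff hblock, (hS hx).2]
  have hcard : #(univ.erase (w (ρ q))) * 3 < #S := by
    rw [card_powersetCard, card_erase_of_mem (mem_univ _), card_erase_of_mem (mem_univ _),
      card_univ, card_univ, hα, Fintype.card_fin]
    decide
  obtain ⟨a, -, ha⟩ := exists_lt_card_fiber_of_mul_lt_card_of_maps_to hmaps hcard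
  obtain ⟨P, hPS, hP⟩ := exists_subset_card_eq (Nat.succ_le_of_lt ha)
  exact ⟨P, hP, fun x hx => hS (mem_filter.1 (hPS hx)).1, a, fun x hx => (mem_filter.1 (hPS hx)).2⟩

-- Four triples off `q` with the same value at `ρ q` pairwise meet in one point, where their words
-- agree as well; so they differ at `p`.
theorem exists_isRainbowPasch (h : IsDeepHole D w) (hα : Fintype.card α = 7) {p : ι}
    (ρ : Fin 7 ↪ ι) (hρ : ∀ i, ρ i ≠ p) (q : Fin 7) :
    ∃ P, IsRainbowPasch (fun x => blockWord D w (x.map ρ) p) q P := by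
  obtain ⟨P, hP, htriple, a, ha⟩ := h.exists_four_triples_of_apply_eq hα ρ q
  have hblock {x : Finset (Fin 7)} (hx : x ∈ P) : IsBlock (x.map ρ) :=
    .inr ((card_map ρ).trans (htriple x hx).1)
  have hinter : ∀ x ∈ P, ∀ y ∈ P, x ≠ y → #(x ∩ y) ≤ 1 := fun x hx y hy hxy => by
    by_contra! hlt
    refine hxy <| map_injective ρ <| h.eq_of_blockWord_apply_eq (hblock hx) (hblock hy) ?_ ?_
      ((ha x hx).trans (ha y hy).symm)
    · rwa [← map_inter, card_map]
    · rw [mem_map']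
      exact (htriple x hx).2
  refine ⟨P, hP, htriple, hinter, fun x hx y hy hxy => ?_⟩
  obtain ⟨i, hi⟩ := inter_nonempty_of_card_inter_le_one (s := univ.erase q)
    (by rw [card_erase_of_mem (mem_univ _), card_univ, Fintype.card_fin]) (by omega)
    (fun x hx => ⟨(htriple x hx).1, subset_erase.2 ⟨subset_univ _, (htriple x hx).2⟩⟩) hinter hx hy
  refine map_injective ρ <| h.eq_of_blockWord_eqOn (s := {p, ρ q, ρ i}) (hblock hx) (hblock hy)
    ?_ ?_
  · rw [card_eq_three.2 ⟨p, ρ q, ρ i, (hρ q).symm, (hρ i).symm, ?_, rfl⟩]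
    exact ρ.injective.ne (ne_of_mem_of_not_mem (mem_inter.1 hi).1 (htriple x hx).2).symm
  · simp only [forall_mem_insert, mem_singleton, forall_eq]
    refine ⟨hxy, (ha x hx).trans (ha y hy).symm, h.eqOn_inter (hblock hx) (hblock hy) ?_⟩
    rw [← map_inter]
    exact mem_map_of_mem ρ hi

theorem two_le_card_triplesThrough (h : IsDeepHole D w) (hα : Fintype.card α = 7) {p i : ι}
    (hip : i ≠ p) {a : α} (ha : a ≠ w p) : 2 ≤ #(triplesThrough D w p i a) := by
  have := h.card_mates_add hip ha
  have := h.card_mates_le_two (by rw [hα]; decide) hip ha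
  have := h.card_eq
  omega

theorem isSpaceColouring (h : IsDeepHole D w) (hα : Fintype.card α = 7) {p : ι}
    (ρ : Fin 7 ↪ ι) (hρ : univ.map ρ = {p}ᶜ) :
    IsSpaceColouring fun x => blockWord D w (x.map ρ) p := by
  have hblock {x : Finset (Fin 7)} : IsBlock (x.map ρ) ↔ IsBlock x := by
    rw [IsBlock, IsBlock, card_map]
  have hp (x : Finset (Fin 7)) : p ∉ x.map ρ := fun hpx => by
    have : p ∈ ({p}ᶜ : Finset ι) := hρ ▸ map_subset_map.2 (subset_univ x) hpx
    simp at this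
  have exists_map {x : Finset ι} (hx : p ∉ x) : ∃ y : Finset (Fin 7), y.map ρ = x := by
    have hsub : x ⊆ univ.map ρ := by rwa [hρ, subset_compl_singleton]
    obtain ⟨y, -, hy⟩ := subset_map_iff.1 hsub
    exact ⟨y, hy.symm⟩
  have hcolour {b : Finset (Fin 7)} (hb : IsBlock b) : blockWord D w (b.map ρ) p ≠ w p := by
    rw [ne_eq, h.blockWord_apply_eq_iff (hblock.2 hb)]
    exact hp b
  refine ⟨fun x y hx hy hxy hinter heq => hxy <| map_injective ρ ?_, fun z hz b hb => ?_,
    fun i b hb => ?_⟩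
  · refine h.eq_of_blockWord_apply_eq (hblock.2 hx) (hblock.2 hy) ?_ (hp x) heq
    rwa [← map_inter, card_map]
  · obtain ⟨x, hx, hzx, hpx, hxb⟩ := h.exists_block (by rwa [card_map]) (hp z) (hcolour hb)
    obtain ⟨x, rfl⟩ := exists_map hpx
    exact ⟨x, hblock.1 hx, map_subset_map.1 hzx, hxb⟩
  · have hip : ρ i ≠ p := fun hip => hp {i} (by simp [hip])
    refine (h.two_le_card_triplesThrough hα hip (hcolour hb)).trans <|
      card_le_card_of_surjOn (map ρ) fun x hx => ?_
    obtain ⟨hx3, hix, hpx, hxb⟩ := mem_triplesThrough.1 hx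
    obtain ⟨x, rfl⟩ := exists_map hpx
    rw [card_map] at hx3
    rw [mem_map'] at hix
    exact ⟨x, by simp [hx3, hix, hxb], rfl⟩

-- A pair `{i, j}` has a companion `{i, k}` of the same colour, since mates come in twos.
theorem card_ne_seven (h : IsDeepHole D w) : Fintype.card α ≠ 7 := by
  intro hα
  have hι : Fintype.card ι = 8 := by rw [h.card_eq, hα]
  obtain ⟨p, i, j, hpi, hpj, hij⟩ := Fintype.two_lt_card_iff.1 (show 2 < Fintype.card ι by omega)
  have hcolour : blockWord D w {i, j} p ≠ w p := by
    rw [ne_eq, h.blockWord_apply_eq_iff (.inl (card_pair hij))]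
    simp [hpi, hpj]
  obtain ⟨k, hk, hkj⟩ := h.exists_mate_ne (by rw [hα]; decide) hpi.symm hcolour
    (mem_mates.2 ⟨hij.symm, hpj.symm, rfl⟩)
  obtain ⟨hki, hkp, hk⟩ := mem_mates.1 hk
  obtain ⟨ρ, hρ, rfl, rfl, rfl⟩ :=
    exists_embedding_map_univ_eq hι hpi.symm hpj.symm hkp hij hki.symm hkj.symm
  refine (h.isSpaceColouring hα ρ hρ).not_forall_exists_isRainbowPasch ?_
    (h.exists_isRainbowPasch hα ρ fun m hm => ?_)
  · simpa only [map_insert, map_singleton] using hk.symm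
  · have : ρ m ∈ ({p}ᶜ : Finset ι) := hρ ▸ mem_map_of_mem ρ (mem_univ m)
    exact mem_compl.1 this (mem_singleton.2 hm)

end IsDeepHole

-- Shorten `C` to length `card α + 1` and dimension three, prescribing on the deleted positions the
-- values of a word `c₀` of `C` except for one change. The rest of `c₀` is a deep hole.
theorem IsMDS.exists_isDeepHole {ι α : Type*} [Fintype ι] [Fintype α] [Nontrivial α] {k : ℕ}
    (hk : 4 ≤ k) {C : Set (ι → α)} (hC : IsMDS k C)
    (hcard : k + Fintype.card α ≤ Fintype.card ι + 2) :
    ∃ (s : Finset ι) (D : Set (s → α)) (w : s → α), IsDeepHole D w := by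
  have hα := Fintype.one_lt_card (α := α)
  obtain ⟨u, -, hu⟩ := exists_subset_card_eq (s := (univ : Finset ι)) (n := k)
    (by rw [card_univ]; omega)
  obtain ⟨t, htu, ht⟩ := exists_subset_card_eq (s := u) (n := k - 3) (by omega)
  obtain ⟨s, hst, hs⟩ := exists_subset_card_eq (s := tᶜ) (n := Fintype.card α + 1)
    (by rw [card_compl]; omega)
  obtain ⟨i₀, hi₀⟩ : t.Nonempty := card_pos.1 (by omega)
  obtain ⟨a, b, hab⟩ := exists_pair_ne α
  obtain ⟨c₀, ⟨hc₀C, hc₀⟩, -⟩ := hC u hu fun _ => a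
  have hdisj : Disjoint s t := (subset_compl_iff_disjoint_right).1 hst
  refine ⟨s, _, fun i => c₀ i, hC.shorten hdisj (m := 3) (by omega) (Function.update c₀ i₀ b),
    by rw [Fintype.card_coe, hs], ?_⟩
  rintro d ⟨c, hcC, hct, hcd⟩
  by_contra! hlt
  have hne : c ≠ c₀ := fun hcc => hab <| by
    rw [← hc₀ i₀ (htu hi₀), ← hcc, hct i₀ hi₀, Function.update_self]
  refine hne <| hC.eq_of_eqOn hcC hc₀C
    (s := (agreement (fun i : s => c₀ i) d).map (.subtype _) ∪ t.erase i₀) ?_ fun i hi => ?_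
  · rw [card_union_of_disjoint (disjoint_of_subset_left
      (fun i hi => property_of_mem_map_subtype _ hi) (hdisj.mono_right (erase_subset _ _))),
      card_map, card_erase_of_mem hi₀]
    omega
  · rcases mem_union.1 hi with hi | hi
    · obtain ⟨j, hj, rfl⟩ := mem_map.1 hi
      exact (hcd j).trans (mem_agreement.1 hj).symm
    · rw [mem_erase] at hi
      rw [hct i hi.2, Function.update_of_ne hi.1]

theorem IsMDS.card_le_add_four {ι α : Type*} [Fintype ι] [Fintype α] (hα : Fintype.card α = 7)
    {k : ℕ} (hk : 4 ≤ k) {C : Set (ι → α)} (hC : IsMDS k C) : Fintype.card ι ≤ k + 4 := by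
  by_contra! hcard
  have : Nontrivial α := Fintype.one_lt_card_iff_nontrivial.1 (by omega)
  obtain ⟨s, D, w, h⟩ := hC.exists_isDeepHole hk (by omega)
  exact h.card_ne_seven hα

end LengthBound

/-- `𝒩(7) = 8`: a minimally supported `AME(8,7)` state exists, and no minimally
supported `AME(n,7)` state exists for `n ≥ 9`. -/
theorem N_seven_eq_eight :
    (∃ ψ : (Fin 8 → Fin 7) → ℂ, IsAME 8 7 ψ ∧ HasMinimalSupport 8 7 ψ) ∧
    (∀ n : ℕ, 9 ≤ n →
      ¬ ∃ ψ : (Fin n → Fin 7) → ℂ, IsAME n 7 ψ ∧ HasMinimalSupport n 7 ψ) := by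
  constructor
  · have : Fact (Nat.Prime 7) := ⟨by norm_num⟩
    obtain ⟨C, hC⟩ := exists_isMDS_of_prime 7 3
    exact ⟨uniformState C, hC.isAME_uniformState, hC.hasMinimalSupport_uniformState⟩
  · rintro n hn ⟨ψ, hψ, hmin⟩
    have := (hψ.isMDS_support hmin).card_le_add_four (Fintype.card_fin 7) (by omega)
    rw [Fintype.card_fin] at this
    omega

end AMEPaper
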